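/- Let d ≥ 1 and let K ⊆ ℝ^d be a symmetric closed convex set. Then for every real symmetric d×d matrix B, the support function of the spectral set Λ(K) with respect to the Frobenius inner product satisfies h_{Λ(K)}(B) = h_K(λ(B)). -/

import Mathlib

/-!
The two suprema agree because the two sets of reals are the same set.

Write `B = U diag(β) Uᵀ`. If `p ∈ K` and `W` is orthogonal, the diagonal of `W diag(p) Wᵀ` is `D p`
with `D i j = (W i j)²` doubly stochastic; by Birkhoff's theorem `D p` is a convex combination of
permutations of `p`, so it lies in `K` (`diag_conj_mem`). This is used twice.

* For `A = V diag(α) Vᵀ` in `Λ(K)`, `tr(AB) = ⟨β, q⟩` with `q` the diagonal of `Uᵀ A U`, and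
  `q ∈ K` by taking `W = Uᵀ V`.
* For `p ∈ K`, the matrix `A = U diag(p) Uᵀ` satisfies `tr(AB) = ⟨β, p⟩`. Its eigenvalue vector is
  the diagonal of `Vᵀ A V` for an orthogonal `V`, so it lies in `K` by taking `W = Vᵀ U`; hence
  `A ∈ Λ(K)`.

Since `K` is symmetric, the order in which eigenvalues are listed does not matter.
-/

open Matrix Finset Pointwise

/-- The vector of eigenvalues of a real symmetric `d × d` matrix, listed in
non-increasing order (junk value `0` if the matrix is not symmetric). -/
noncomputable def eigVec {d : ℕ} (A : Matrix (Fin d) (Fin d) ℝ) : Fin d → ℝ :=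
  if hA : A.IsHermitian then fun i => hA.eigenvalues (Tuple.sort hA.eigenvalues i.rev) else 0

/-- A set `K ⊆ ℝ^d` is symmetric if it is invariant under all coordinate permutations. -/
def IsSymmSet {d : ℕ} (K : Set (Fin d → ℝ)) : Prop :=
  ∀ σ : Equiv.Perm (Fin d), (fun p => p ∘ σ) '' K = K

/-- The spectral set `Λ(K) = {A ∈ S²ℝ^d : λ(A) ∈ K}` of a set `K ⊆ ℝ^d`,
realized as the set of real symmetric matrices whose eigenvalue vector lies in `K`. -/
def SpectralSet {d : ℕ} (K : Set (Fin d → ℝ)) : Set (Matrix (Fin d) (Fin d) ℝ) :=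
  {A | A.IsHermitian ∧ eigVec A ∈ K}

/-- Support function of a set of vectors, w.r.t. the standard inner product. -/
noncomputable def suppVec {d : ℕ} (K : Set (Fin d → ℝ)) (c : Fin d → ℝ) : ℝ :=
  sSup {t | ∃ p ∈ K, t = ∑ i, c i * p i}

/-- Support function of a set of symmetric matrices, w.r.t. the Frobenius inner
product `⟨A,B⟩ = tr(AB)`. -/
noncomputable def suppMat {d : ℕ} (C : Set (Matrix (Fin d) (Fin d) ℝ))
    (B : Matrix (Fin d) (Fin d) ℝ) : ℝ :=
  sSup {t | ∃ A ∈ C, t = (A * B).trace}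

lemma IsSymmSet.comp_mem_iff {d : ℕ} {K : Set (Fin d → ℝ)} (hK : IsSymmSet K)
    (σ : Equiv.Perm (Fin d)) (p : Fin d → ℝ) : p ∘ σ ∈ K ↔ p ∈ K := by
  have key : ∀ (τ : Equiv.Perm (Fin d)) (q : Fin d → ℝ), q ∈ K → q ∘ τ ∈ K := by
    intro τ q hq
    rw [← hK τ]
    exact ⟨q, hq, rfl⟩
  refine ⟨fun h => ?_, key σ p⟩
  simpa [Function.comp_assoc] using key σ⁻¹ _ h

/-- The ordered eigenvalue vector is a rearrangement of Mathlib's `eigenvalues`. -/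
lemma eigVec_eq_comp {d : ℕ} {A : Matrix (Fin d) (Fin d) ℝ} (hA : A.IsHermitian) :
    ∃ σ : Equiv.Perm (Fin d), eigVec A = hA.eigenvalues ∘ σ := by
  refine ⟨Fin.revPerm.trans (Tuple.sort hA.eigenvalues), ?_⟩
  ext i
  rw [eigVec, dif_pos hA]
  rfl

/-- The entrywise square of an orthogonal matrix is doubly stochastic. -/
lemma sq_mem_doublyStochastic {d : ℕ} (W : unitaryGroup (Fin d) ℝ) :
    (Matrix.of fun i j => (W : Matrix (Fin d) (Fin d) ℝ) i j ^ 2) ∈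
      doublyStochastic ℝ (Fin d) := by
  rw [mem_doublyStochastic_iff_sum]
  refine ⟨fun i j => sq_nonneg _, fun i => ?_, fun j => ?_⟩
  · have := congrFun (congrFun (Unitary.coe_mul_star_self W) i) i
    simpa [Matrix.mul_apply, star_apply, sq] using this
  · have := congrFun (congrFun (Unitary.coe_star_mul_self W) j) j
    simpa [Matrix.mul_apply, star_apply, sq] using this

lemma mulVec_mem_of_doublyStochastic {d : ℕ} {K : Set (Fin d → ℝ)} (hK : IsSymmSet K)
    (hconv : Convex ℝ K) {D : Matrix (Fin d) (Fin d) ℝ} (hD : D ∈ doublyStochastic ℝ (Fin d))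
    {p : Fin d → ℝ} (hp : p ∈ K) : D *ᵥ p ∈ K := by
  obtain ⟨w, hw0, hw1, rfl⟩ := exists_eq_sum_perm_of_mem_doublyStochastic hD
  simp only [Matrix.sum_mulVec, Matrix.smul_mulVec, Matrix.permMatrix_mulVec]
  exact hconv.sum_mem (fun σ _ => hw0 σ) hw1 fun σ _ => (hK.comp_mem_iff σ p).2 hp

/-- The easy half of the Schur–Horn theorem, relative to a symmetric convex set. -/
lemma diag_conj_mem {d : ℕ} {K : Set (Fin d → ℝ)} (hK : IsSymmSet K) (hconv : Convex ℝ K)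
    (W : unitaryGroup (Fin d) ℝ) {p : Fin d → ℝ} (hp : p ∈ K) :
    ((W : Matrix (Fin d) (Fin d) ℝ) * diagonal p *
      star (W : Matrix (Fin d) (Fin d) ℝ)).diag ∈ K := by
  convert mulVec_mem_of_doublyStochastic hK hconv (sq_mem_doublyStochastic W) hp using 1
  ext i
  rw [diag_apply, Matrix.mul_apply]
  simp only [mul_diagonal, star_apply, star_trivial, mulVec, dotProduct, of_apply]
  exact Finset.sum_congr rfl fun j _ => by ring

lemma spectral_real {d : ℕ} {A : Matrix (Fin d) (Fin d) ℝ} (hA : A.IsHermitian) :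
    A = (hA.eigenvectorUnitary : Matrix (Fin d) (Fin d) ℝ) * diagonal hA.eigenvalues *
      star (hA.eigenvectorUnitary : Matrix (Fin d) (Fin d) ℝ) := by
  have h := hA.spectral_theorem
  rw [Unitary.conjStarAlgAut_apply] at h
  exact h

lemma trace_mul_eq {d : ℕ} {B : Matrix (Fin d) (Fin d) ℝ} (hB : B.IsHermitian)
    (A : Matrix (Fin d) (Fin d) ℝ) :
    (A * B).trace = ∑ i, hB.eigenvalues i *
      (star (hB.eigenvectorUnitary : Matrix (Fin d) (Fin d) ℝ) * A *
        hB.eigenvectorUnitary).diag i := by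
  conv_lhs => rw [spectral_real hB, ← Matrix.mul_assoc, Matrix.trace_mul_comm]
  rw [← Matrix.mul_assoc, ← Matrix.mul_assoc]
  simp [Matrix.trace, mul_diagonal, mul_comm]

/-- Undoing one orthogonal conjugation and applying another stays inside `K` on the diagonal. -/
lemma diag_conj_conj_mem {d : ℕ} {K : Set (Fin d → ℝ)} (hK : IsSymmSet K) (hconv : Convex ℝ K)
    (U V : unitaryGroup (Fin d) ℝ) {p : Fin d → ℝ} (hp : p ∈ K) :
    (star (U : Matrix (Fin d) (Fin d) ℝ) * ((V : Matrix (Fin d) (Fin d) ℝ) * diagonal p *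
      star (V : Matrix (Fin d) (Fin d) ℝ)) * (U : Matrix (Fin d) (Fin d) ℝ)).diag ∈ K := by
  have h := diag_conj_mem hK hconv (star U * V) hp
  simpa [Matrix.mul_assoc] using h

lemma eigenvalues_eq_diag {d : ℕ} {A : Matrix (Fin d) (Fin d) ℝ} (hA : A.IsHermitian) :
    hA.eigenvalues = (star (hA.eigenvectorUnitary : Matrix (Fin d) (Fin d) ℝ) * A *
        hA.eigenvectorUnitary).diag := by
  have h := hA.conjStarAlgAut_star_eigenvectorUnitary
  rw [Unitary.conjStarAlgAut_star_apply] at h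
  rw [h]
  ext i
  simp

lemma mem_spectralSet_iff {d : ℕ} {K : Set (Fin d → ℝ)} (hK : IsSymmSet K)
    {A : Matrix (Fin d) (Fin d) ℝ} (hA : A.IsHermitian) :
    A ∈ SpectralSet K ↔ hA.eigenvalues ∈ K := by
  obtain ⟨σ, hσ⟩ := eigVec_eq_comp hA
  simp only [SpectralSet, Set.mem_ofPred_eq, hσ, hK.comp_mem_iff, hA, true_and]

/-- Conjugates of `diagonal p` with `p ∈ K` lie in the spectral set. -/
lemma conj_mem_spectralSet {d : ℕ} {K : Set (Fin d → ℝ)} (hK : IsSymmSet K) (hconv : Convex ℝ K)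
    (U : unitaryGroup (Fin d) ℝ) {p : Fin d → ℝ} (hp : p ∈ K) :
    (U : Matrix (Fin d) (Fin d) ℝ) * diagonal p * star (U : Matrix (Fin d) (Fin d) ℝ) ∈
      SpectralSet K := by
  have hA : ((U : Matrix (Fin d) (Fin d) ℝ) * diagonal p *
      star (U : Matrix (Fin d) (Fin d) ℝ)).IsHermitian :=
    isHermitian_mul_mul_conjTranspose _ (isHermitian_diagonal p)
  rw [mem_spectralSet_iff hK hA, eigenvalues_eq_diag hA]
  exact diag_conj_conj_mem hK hconv _ U hp

/-- For a symmetric closed convex set `K ⊆ ℝ^d` and any real symmetric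
matrix `B`, the support function of `Λ(K)` satisfies `h_{Λ(K)}(B) = h_K(λ(B))`. -/
theorem support_spectralSet {d : ℕ} (hd : 1 ≤ d) (K : Set (Fin d → ℝ))
    (hsymm : IsSymmSet K) (hconv : Convex ℝ K) (hclosed : IsClosed K) :
    ∀ B : Matrix (Fin d) (Fin d) ℝ, B.IsHermitian →
      suppMat (SpectralSet K) B = suppVec K (eigVec B) := by
  intro B hB
  obtain ⟨σ, hσ⟩ := eigVec_eq_comp hB
  have hset : {t | ∃ A ∈ SpectralSet K, t = (A * B).trace} =
      {t | ∃ p ∈ K, t = ∑ i, eigVec B i * p i} := by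
    -- Reindexing by `σ` lets `⟨λ(B), p⟩` be computed from the unordered eigenvalues.
    have hreindex : ∀ p : Fin d → ℝ,
        ∑ i, eigVec B i * (p ∘ σ) i = ∑ i, hB.eigenvalues i * p i := by
      intro p
      rw [hσ]
      exact Equiv.sum_comp σ fun i => hB.eigenvalues i * p i
    ext t
    constructor
    · rintro ⟨A, hAK, rfl⟩
      have hA := hAK.1
      have hq := diag_conj_conj_mem hsymm hconv hB.eigenvectorUnitary hA.eigenvectorUnitary
        ((mem_spectralSet_iff hsymm hA).1 hAK)
      rw [← spectral_real hA] at hq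
      exact ⟨_, (hsymm.comp_mem_iff σ _).2 hq, by rw [hreindex, trace_mul_eq hB]⟩
    · rintro ⟨p, hp, rfl⟩
      -- The entries of `p` are matched to the unordered eigenvalues of `B` through `σ⁻¹`.
      have hp' : p ∘ σ.symm ∈ K := (hsymm.comp_mem_iff σ.symm p).2 hp
      refine ⟨_, conj_mem_spectralSet hsymm hconv hB.eigenvectorUnitary hp', ?_⟩
      have hU := Unitary.coe_star_mul_self hB.eigenvectorUnitary
      have hcancel : star (hB.eigenvectorUnitary : Matrix (Fin d) (Fin d) ℝ) *
          ((hB.eigenvectorUnitary : Matrix (Fin d) (Fin d) ℝ) * diagonal (p ∘ σ.symm) *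
            star (hB.eigenvectorUnitary : Matrix (Fin d) (Fin d) ℝ)) *
          (hB.eigenvectorUnitary : Matrix (Fin d) (Fin d) ℝ) = diagonal (p ∘ σ.symm) := by
        rw [← Matrix.mul_assoc, ← Matrix.mul_assoc, hU, Matrix.one_mul, Matrix.mul_assoc, hU,
          Matrix.mul_one]
      rw [trace_mul_eq hB, hcancel, diag_diagonal, ← hreindex]
      simp
  rw [suppMat, suppVec, hset]
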